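/- arXiv:2103.17196 — 7 statements merged into one kernel-verified Lean document; each statement's English description precedes it below -/
import Mathlib

section
/- For every natural number $n$ and every real $a \neq 0$, the function $x \mapsto x\sum_{l=0}^{n} \frac{2^{2l}(2n+2)!\,(l!)^2}{2^{2n+2}(2l+1)!\,((n+1)!)^2}\,\left(\sqrt{x^2+a^2}\right)^{2l+1} a^{2(n-l)} \;+\; \frac{(2n+2)!}{2^{2n+2}((n+1)!)^2}\,a^{2n+2}\,\ln\left(\sqrt{x^2+a^2}+x\right)$ has derivative $\left(\sqrt{x^2+a^2}\right)^{2n+1}$ at every $x \in \mathbb{R}$. (This is the paper's explicit closed form for $i_{2n+1}(x;a)$.) -/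
/-!
The proof is by induction on `n`. Write `r = √(x² + a²)` and `I n` for the claimed primitive of
`r ^ (2n+1)`. Comparing coefficients shows the reduction formula
`I (n+1) = x r^(2n+3) / (2n+4) + (2n+3)/(2n+4) * a² * I n`
(`closedForm_succ`), while `x² = r² - a²` gives
`(x r^(2n+3))' = (2n+4) r^(2n+3) - (2n+3) a² r^(2n+1)`, so the derivative of `I (n+1)` is
`r^(2n+3)`. The base case `I 0 = (x r + a² log (r + x)) / 2` is a direct computation using
`(log (r + x))' = 1 / r`.
-/

/-- The closed form `i_{2n+1}(x;a)` whose derivative is to be computed. -/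
noncomputable def closedForm (a : ℝ) (n : ℕ) (x : ℝ) : ℝ :=
  x * ∑ l ∈ Finset.range (n + 1),
    (2 ^ (2 * l) * (2 * n + 2).factorial * (l.factorial) ^ 2 : ℝ) /
        (2 ^ (2 * n + 2) * (2 * l + 1).factorial * ((n + 1).factorial) ^ 2) *
      (Real.sqrt (x ^ 2 + a ^ 2)) ^ (2 * l + 1) * a ^ (2 * (n - l)) +
  ((2 * n + 2).factorial : ℝ) / (2 ^ (2 * n + 2) * ((n + 1).factorial) ^ 2) *
    a ^ (2 * n + 2) * Real.log (Real.sqrt (x ^ 2 + a ^ 2) + x)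

lemma cast_factorial_two_mul_add_four (n : ℕ) :
    ((2 * (n + 1) + 2).factorial : ℝ) = (2 * n + 4) * (2 * n + 3) * (2 * n + 2).factorial := by
  rw [show 2 * (n + 1) + 2 = (2 * n + 2) + 1 + 1 by ring, Nat.factorial_succ, Nat.factorial_succ]
  push_cast
  ring

lemma cast_factorial_add_two (n : ℕ) :
    ((n + 1 + 1).factorial : ℝ) = (n + 2) * (n + 1).factorial := by
  rw [Nat.factorial_succ]
  push_cast
  ring

lemma closedForm_succ (a : ℝ) (n : ℕ) (x : ℝ) :
    closedForm a (n + 1) x =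
      1 / (2 * n + 4) * (x * Real.sqrt (x ^ 2 + a ^ 2) ^ (2 * n + 3)) +
        (2 * n + 3) / (2 * n + 4) * a ^ 2 * closedForm a n x := by
  unfold closedForm
  have h2 : (n : ℝ) + 2 ≠ 0 := by positivity
  have h4 : 2 * (n : ℝ) + 4 ≠ 0 := by positivity
  have hf : ((n + 1).factorial : ℝ) ≠ 0 := by positivity
  have hg : ((2 * n + 2).factorial : ℝ) ≠ 0 := by positivity
  rw [Finset.sum_range_succ, cast_factorial_two_mul_add_four n,
    cast_factorial_add_two n]
  generalize Real.sqrt (x ^ 2 + a ^ 2) = r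
  generalize Real.log (r + x) = L
  have hsum : ∑ l ∈ Finset.range (n + 1),
      (2 ^ (2 * l) * ((2 * n + 4) * (2 * n + 3) * (2 * n + 2).factorial) *
            (l.factorial) ^ 2 : ℝ) /
          (2 ^ (2 * (n + 1) + 2) * (2 * l + 1).factorial *
            ((n + 2) * (n + 1).factorial) ^ 2) *
        r ^ (2 * l + 1) * a ^ (2 * (n + 1 - l)) =
      (2 * n + 3) / (2 * n + 4) * a ^ 2 * ∑ l ∈ Finset.range (n + 1),
        (2 ^ (2 * l) * (2 * n + 2).factorial * (l.factorial) ^ 2 : ℝ) /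
            (2 ^ (2 * n + 2) * (2 * l + 1).factorial * ((n + 1).factorial) ^ 2) *
          r ^ (2 * l + 1) * a ^ (2 * (n - l)) := by
    rw [Finset.mul_sum]
    refine Finset.sum_congr rfl fun l hl => ?_
    -- `l ≤ n`, so the truncated subtractions in the exponents of `a` are genuine.
    have hl' : 2 * (n + 1 - l) = 2 * (n - l) + 2 := by
      have := Finset.mem_range.mp hl
      omega
    have hl3 : ((2 * l + 1).factorial : ℝ) ≠ 0 := by positivity
    rw [hl', pow_add a]
    field_simp
    ring
  rw [hsum]
  have hlast : (2 ^ (2 * (n + 1)) * ((2 * n + 4) * (2 * n + 3) * (2 * n + 2).factorial) *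
        ((n + 1).factorial) ^ 2 : ℝ) /
      (2 ^ (2 * (n + 1) + 2) * (2 * (n + 1) + 1).factorial *
        ((n + 2) * (n + 1).factorial) ^ 2) = 1 / (2 * n + 4) := by
    have : ((2 * (n + 1) + 1).factorial : ℝ) = (2 * n + 3) * (2 * n + 2).factorial := by
      rw [show 2 * (n + 1) + 1 = (2 * n + 2) + 1 by ring, Nat.factorial_succ]
      push_cast
      ring
    have h3 : 2 * (n : ℝ) + 3 ≠ 0 := by positivity
    rw [this]
    field_simp
    ring
  have hlog : ((2 * n + 4) * (2 * n + 3) * (2 * n + 2).factorial : ℝ) /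
      (2 ^ (2 * (n + 1) + 2) * ((n + 2) * (n + 1).factorial) ^ 2) =
      (2 * n + 3) / (2 * n + 4) *
        ((2 * n + 2).factorial / (2 ^ (2 * n + 2) * ((n + 1).factorial) ^ 2)) := by
    field_simp
    ring
  rw [hlast, hlog, Nat.sub_self]
  ring

lemma hasDerivAt_sqrt_sq_add_sq {a : ℝ} (ha : a ≠ 0) (x : ℝ) :
    HasDerivAt (fun x : ℝ => Real.sqrt (x ^ 2 + a ^ 2)) (x / Real.sqrt (x ^ 2 + a ^ 2)) x := by
  have h0 : x ^ 2 + a ^ 2 ≠ 0 := by positivity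
  refine (((hasDerivAt_pow 2 x).add_const (a ^ 2)).sqrt h0).congr_deriv ?_
  rw [Nat.add_one_sub_one, pow_one, Nat.cast_ofNat, mul_div_mul_left _ _ two_ne_zero]

lemma sqrt_sq_add_sq_add_pos {a : ℝ} (ha : a ≠ 0) (x : ℝ) :
    0 < Real.sqrt (x ^ 2 + a ^ 2) + x := by
  have h : |x| < Real.sqrt (x ^ 2 + a ^ 2) := by
    rw [← Real.sqrt_sq_eq_abs]
    exact Real.sqrt_lt_sqrt (sq_nonneg x) (lt_add_of_pos_right _ (by positivity))
  linarith [neg_abs_le x]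

lemma hasDerivAt_closedForm {a : ℝ} (ha : a ≠ 0) (n : ℕ) (x : ℝ) :
    HasDerivAt (closedForm a n) (Real.sqrt (x ^ 2 + a ^ 2) ^ (2 * n + 1)) x := by
  have hr := hasDerivAt_sqrt_sq_add_sq ha x
  have hpos : 0 < Real.sqrt (x ^ 2 + a ^ 2) := by positivity
  have hsq : Real.sqrt (x ^ 2 + a ^ 2) ^ 2 = x ^ 2 + a ^ 2 := Real.sq_sqrt (by positivity)
  induction n with
  | zero =>
    have hadd := sqrt_sq_add_sq_add_pos ha x
    have h := (((hasDerivAt_id x).mul hr).const_mul (1 / 2)).add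
      (((hr.add (hasDerivAt_id x)).log hadd.ne').const_mul (1 / 2 * a ^ 2))
    refine (h.congr_of_eventuallyEq (.of_forall fun y => ?_)).congr_deriv ?_
    · simp [closedForm]
      ring
    · simp only [Pi.add_apply, id]
      generalize Real.sqrt (x ^ 2 + a ^ 2) = r at *
      have : r ≠ 0 := hpos.ne'
      have : r + x ≠ 0 := hadd.ne'
      field_simp
      linear_combination (-(r + x)) * hsq
  | succ n ih =>
    have h := (((hasDerivAt_id x).mul (hr.pow (2 * n + 3))).const_mul (1 / (2 * n + 4 : ℝ))).add
      (ih.const_mul ((2 * n + 3) / (2 * n + 4) * a ^ 2))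
    refine (h.congr_of_eventuallyEq (.of_forall fun y => closedForm_succ a n y)).congr_deriv ?_
    simp only [Pi.pow_apply, id]
    generalize Real.sqrt (x ^ 2 + a ^ 2) = r at *
    have : r ≠ 0 := hpos.ne'
    have h4 : 2 * (n : ℝ) + 4 ≠ 0 := by positivity
    rw [show 2 * n + 3 - 1 = 2 * n + 1 + 1 by omega, show 2 * (n + 1) + 1 = 2 * n + 1 + 2 by ring,
      show 2 * n + 3 = 2 * n + 1 + 2 by ring, pow_add r, pow_add r]
    push_cast
    field_simp
    linear_combination (-(2 * n + 3 : ℝ)) * r ^ (2 * n + 2) * hsq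

/-- The paper's explicit closed form for `i_{2n+1}(x;a)` (`a ≠ 0`):
`x ∑_{l=0}^n (2^{2l}(2n+2)!(l!)²)/(2^{2n+2}(2l+1)!((n+1)!)²) r^{2l+1} a^{2(n-l)}
 + (2n+2)!/(2^{2n+2}((n+1)!)²) a^{2n+2} ln(r + x)` is a primitive of `r^{2n+1}`,
`r = √(x² + a²)`. -/
theorem stmt5 (n : ℕ) (a : ℝ) (ha : a ≠ 0) (x : ℝ) :
    HasDerivAt
      (fun x : ℝ =>
        x * ∑ l ∈ Finset.range (n + 1),
          (2 ^ (2 * l) * (2 * n + 2).factorial * (l.factorial) ^ 2 : ℝ) /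
              (2 ^ (2 * n + 2) * (2 * l + 1).factorial * ((n + 1).factorial) ^ 2) *
            (Real.sqrt (x ^ 2 + a ^ 2)) ^ (2 * l + 1) * a ^ (2 * (n - l)) +
        ((2 * n + 2).factorial : ℝ) / (2 ^ (2 * n + 2) * ((n + 1).factorial) ^ 2) *
          a ^ (2 * n + 2) * Real.log (Real.sqrt (x ^ 2 + a ^ 2) + x))
      ((Real.sqrt (x ^ 2 + a ^ 2)) ^ (2 * n + 1)) x := by
  exact hasDerivAt_closedForm ha n x
end

section
/- For all real $y', z'$ with $z' \neq 0$, the function $x \mapsto y'\operatorname{sgn}(z')\arctan\frac{y' x}{|z'|\sqrt{x^2+y'^2+z'^2}} + z'\ln\left(\sqrt{x^2+y'^2+z'^2}+x\right)$ has derivative $\frac{z'\sqrt{x^2+y'^2+z'^2}}{x^2+z'^2}$ at every $x \in \mathbb{R}$. (This is the paper's formula for $k_1(x;y',z')$.) -/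
/-!
Write `r = √(x² + y'² + z'²)`, so that `dr/dx = x / r`. The logarithm contributes `z' / r`, since
`(r + x)' = (r + x) / r`. For the arctangent, with `u = y' x / (|z'| r)`, the factorization
`z'² r² + y'² x² = (x² + z'²) (y'² + z'²)` gives `(arctan u)' = y' |z'| / (r (x² + z'²))`.
As `sgn(z') |z'| = z'`, the total is `z' (y'² + x² + z'²) / (r (x² + z'²)) = z' r / (x² + z'²)`.
-/

/-- The paper's formula for `k₁(x;y',z')`: for `z' ≠ 0`, the function
`x ↦ y' sgn(z') arctan (y'x/(|z'| r)) + z' ln(r + x)`, `r = √(x² + y'² + z'²)`,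
has derivative `z' r/(x² + z'²)` at every `x`. -/
theorem stmt8 (y' z' : ℝ) (hz : z' ≠ 0) (x : ℝ) :
    HasDerivAt
      (fun x : ℝ =>
        y' * Real.sign z' *
            Real.arctan (y' * x / (|z'| * Real.sqrt (x ^ 2 + y' ^ 2 + z' ^ 2))) +
          z' * Real.log (Real.sqrt (x ^ 2 + y' ^ 2 + z' ^ 2) + x))
      (z' * Real.sqrt (x ^ 2 + y' ^ 2 + z' ^ 2) / (x ^ 2 + z' ^ 2)) x := by
  have hz2 : 0 < z' ^ 2 := by positivity
  have hq : 0 < x ^ 2 + y' ^ 2 + z' ^ 2 := by positivity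
  have hw : 0 < x ^ 2 + z' ^ 2 := by positivity
  have hv : 0 < y' ^ 2 + z' ^ 2 := by positivity
  have ha : 0 < |z'| := abs_pos.mpr hz
  have ha2 : |z'| ^ 2 = z' ^ 2 := sq_abs z'
  have hsa : Real.sign z' * |z'| = z' := by
    rcases lt_or_gt_of_ne hz with h | h
    · rw [Real.sign_of_neg h, abs_of_neg h]; ring
    · rw [Real.sign_of_pos h, abs_of_pos h]; ring
  have hr0 : 0 < Real.sqrt (x ^ 2 + y' ^ 2 + z' ^ 2) := Real.sqrt_pos.mpr hq
  have hr : HasDerivAt (fun t : ℝ => Real.sqrt (t ^ 2 + y' ^ 2 + z' ^ 2))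
      (x / Real.sqrt (x ^ 2 + y' ^ 2 + z' ^ 2)) x := by
    have h := (((hasDerivAt_pow 2 x).add_const (y' ^ 2)).add_const (z' ^ 2)).sqrt hq.ne'
    convert h using 1
    rw [div_eq_div_iff hr0.ne' (by positivity)]
    push_cast
    ring
  have hr2 : Real.sqrt (x ^ 2 + y' ^ 2 + z' ^ 2) ^ 2 = x ^ 2 + y' ^ 2 + z' ^ 2 :=
    Real.sq_sqrt hq.le
  have hrx : 0 < Real.sqrt (x ^ 2 + y' ^ 2 + z' ^ 2) + x := by
    have : |x| < Real.sqrt (x ^ 2 + y' ^ 2 + z' ^ 2) := by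
      apply Real.lt_sqrt_of_sq_lt
      rw [sq_abs]
      linarith
    linarith [neg_abs_le x]
  have hlog := (hr.add (hasDerivAt_id x)).log hrx.ne'
  have hatan := (((hasDerivAt_id x).const_mul y').div (hr.const_mul |z'|)
    (mul_pos ha hr0).ne').arctan
  have hsum := (hatan.const_mul (y' * Real.sign z')).add (hlog.const_mul z')
  refine hsum.congr_deriv ?_
  simp only [id, Pi.add_apply, Pi.div_apply]
  generalize Real.sqrt (x ^ 2 + y' ^ 2 + z' ^ 2) = r at *
  generalize |z'| = a at *
  generalize Real.sign z' = s at *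
  have hden : 1 + (y' * x / (a * r)) ^ 2
      = (x ^ 2 + z' ^ 2) * (y' ^ 2 + z' ^ 2) / (a ^ 2 * r ^ 2) := by
    field_simp
    rw [ha2, hr2]
    ring
  have hnum : (y' * 1 * (a * r) - y' * x * (a * (x / r))) / (a * r) ^ 2
      = y' * (y' ^ 2 + z' ^ 2) / (a * r ^ 3) := by
    field_simp
    rw [hr2]
    ring
  have h1 : y' * s * (1 / (1 + (y' * x / (a * r)) ^ 2) *
      ((y' * 1 * (a * r) - y' * x * (a * (x / r))) / (a * r) ^ 2))
      = y' ^ 2 * (s * a) / (r * (x ^ 2 + z' ^ 2)) := by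
    rw [hden, hnum]
    field_simp
  have h2 : z' * ((x / r + 1) / (r + x)) = z' / r := by
    field_simp
    ring
  rw [h1, h2, hsa]
  field_simp
  rw [hr2]
  ring
end

section
/- For all real $y' \neq 0$ and $z' \neq 0$, the function $x \mapsto \frac{\operatorname{sgn}(z')}{y'}\arctan\frac{y' x}{|z'|\sqrt{x^2+y'^2+z'^2}}$ has derivative $\frac{z'}{(x^2+z'^2)\sqrt{x^2+y'^2+z'^2}}$ at every $x \in \mathbb{R}$. (This is the paper's formula for $k_{-1}(x;y',z')$.) -/
/-!
Write `r = √(x² + y'² + z'²)` and `u = y' x / (|z'| r)`. The chain rule gives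
`u' = y' (y'² + z'²) / (|z'| r³)`, and the factorisation
`z'² r² + y'² x² = (x² + z'²) (y'² + z'²)` gives
`1 + u² = (x² + z'²) (y'² + z'²) / (z'² r²)`. Hence
`u' / (1 + u²) = y' |z'| / ((x² + z'²) r)`, and `sgn(z') |z'| = z'` finishes the computation.
-/

/-- The paper's formula for `k₋₁(x;y',z')`: for `y' ≠ 0`, `z' ≠ 0`, the function
`x ↦ (sgn(z')/y') arctan (y'x/(|z'| r))`, `r = √(x² + y'² + z'²)`, has derivative
`z'/((x² + z'²) r)` at every `x`. -/
theorem stmt9 (y' z' : ℝ) (hy : y' ≠ 0) (hz : z' ≠ 0) (x : ℝ) :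
    HasDerivAt
      (fun x : ℝ => Real.sign z' / y' *
        Real.arctan (y' * x / (|z'| * Real.sqrt (x ^ 2 + y' ^ 2 + z' ^ 2))))
      (z' / ((x ^ 2 + z' ^ 2) * Real.sqrt (x ^ 2 + y' ^ 2 + z' ^ 2))) x := by
  have hz2 : 0 < z' ^ 2 := by positivity
  have hpos : 0 < x ^ 2 + y' ^ 2 + z' ^ 2 := by positivity
  have hr : HasDerivAt (fun x : ℝ => Real.sqrt (x ^ 2 + y' ^ 2 + z' ^ 2))
      (x / Real.sqrt (x ^ 2 + y' ^ 2 + z' ^ 2)) x := by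
    have h := (((hasDerivAt_pow 2 x).add_const (y' ^ 2)).add_const (z' ^ 2)).sqrt hpos.ne'
    refine h.congr_deriv ?_
    norm_num
    field_simp
  have ha : 0 < |z'| := abs_pos.mpr hz
  have hsq : Real.sqrt (x ^ 2 + y' ^ 2 + z' ^ 2) ^ 2 = x ^ 2 + y' ^ 2 + z' ^ 2 :=
    Real.sq_sqrt hpos.le
  have hr0 : 0 < Real.sqrt (x ^ 2 + y' ^ 2 + z' ^ 2) := Real.sqrt_pos.mpr hpos
  have h := ((((hasDerivAt_id x).const_mul y').div (hr.const_mul |z'|)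
    (mul_pos ha hr0).ne').arctan).const_mul (Real.sign z' / y')
  have hs : z' = Real.sign z' * |z'| := by
    rcases hz.lt_or_gt with h0 | h0
    · rw [Real.sign_of_neg h0, abs_of_neg h0]; ring
    · rw [Real.sign_of_pos h0, abs_of_pos h0]; ring
  have ha2 : |z'| ^ 2 = z' ^ 2 := sq_abs z'
  refine h.congr_deriv ?_
  simp only [id, Pi.div_apply]
  generalize Real.sqrt (x ^ 2 + y' ^ 2 + z' ^ 2) = r at *
  have hxz : 0 < x ^ 2 + z' ^ 2 := by positivity
  have hyz : 0 < y' ^ 2 + z' ^ 2 := by positivity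
  have hu : 1 + (y' * x / (|z'| * r)) ^ 2
      = (x ^ 2 + z' ^ 2) * (y' ^ 2 + z' ^ 2) / (z' ^ 2 * r ^ 2) := by
    rw [div_pow, mul_pow |z'|, ha2]
    field_simp
    rw [hsq]
    ring
  have hu' : (y' * 1 * (|z'| * r) - y' * x * (|z'| * (x / r))) / (|z'| * r) ^ 2
      = y' * (y' ^ 2 + z' ^ 2) / (|z'| * r ^ 3) := by
    field_simp
    rw [hsq]
    ring
  rw [hu, hu']
  have key : Real.sign z' / y' * (1 / ((x ^ 2 + z' ^ 2) * (y' ^ 2 + z' ^ 2) / (z' ^ 2 * r ^ 2))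
      * (y' * (y' ^ 2 + z' ^ 2) / (|z'| * r ^ 3)))
      = Real.sign z' * |z'| / ((x ^ 2 + z' ^ 2) * r) := by
    rw [← ha2] at *
    field_simp
  rw [key, ← hs]
end

section
/- Let $k \neq 0$ and $h$ be real numbers, and define $f : (0,\infty) \to \mathbb{C}$ by $f(\rho) = \frac{e^{ik\sqrt{\rho^2+h^2}} - e^{ik|h|}}{4\pi i k \rho^2}$. Then for every $\rho > 0$, $f$ is differentiable at $\rho$ and $2 f(\rho) + \rho f'(\rho) = \frac{e^{ik\sqrt{\rho^2+h^2}}}{4\pi \sqrt{\rho^2+h^2}}$. (This is the radial form of the paper's identity $G_k = \nabla_s' \cdot [\boldsymbol{\rho} f_k(\rho;h)]$, since the planar divergence of the radial field $\boldsymbol{\rho}\, f(|\boldsymbol{\rho}|)$ equals $2f(\rho)+\rho f'(\rho)$.) -/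
open Complex Real

/-!
Write `f = N / D` with `N = e^{ik r} - e^{ik|h|}`, `r = √(ρ² + h²)` and `D = 4π i k ρ²`.
Since `ρ D' = 2 D`, the quotient rule gives `ρ f' = ρ N' / D - 2 f`, so `2 f + ρ f' = ρ N' / D`.
As `r' = ρ / r`, one has `N' = i k (ρ / r) e^{ik r}`, and the factors `i k ρ²` cancel.
-/

/-- Radial form of the paper's identity `G_k = ∇'_s ⋅ [ρ f_k(ρ;h)]`: for real `k ≠ 0`
and `h`, the function `f(ρ) = (e^{ik√(ρ²+h²)} - e^{ik|h|})/(4π i k ρ²)`, defined on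
`(0,∞)`, is differentiable at every `ρ > 0` and satisfies
`2 f(ρ) + ρ f'(ρ) = e^{ik√(ρ²+h²)}/(4π √(ρ²+h²))`. -/
theorem stmt11 (k h : ℝ) (hk : k ≠ 0)
    (f : ℝ → ℂ)
    (hf : ∀ ρ : ℝ, 0 < ρ → f ρ =
      (Complex.exp (Complex.I * k * Real.sqrt (ρ ^ 2 + h ^ 2)) -
          Complex.exp (Complex.I * k * |h|)) /
        (4 * Real.pi * Complex.I * k * ρ ^ 2))
    (ρ : ℝ) (hρ : 0 < ρ) :
    ∃ d : ℂ, HasDerivAt f d ρ ∧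
      2 * f ρ + ρ * d =
        Complex.exp (Complex.I * k * Real.sqrt (ρ ^ 2 + h ^ 2)) /
          (4 * Real.pi * Real.sqrt (ρ ^ 2 + h ^ 2)) := by
  have hpos : 0 < ρ ^ 2 + h ^ 2 := by positivity
  have hr : HasDerivAt (fun x : ℝ => Real.sqrt (x ^ 2 + h ^ 2))
      (2 * ρ / (2 * Real.sqrt (ρ ^ 2 + h ^ 2))) ρ := by
    have := ((hasDerivAt_pow 2 ρ).add_const (h ^ 2)).sqrt hpos.ne'
    simpa using this
  have hsqrt : 0 < Real.sqrt (ρ ^ 2 + h ^ 2) := Real.sqrt_pos.mpr hpos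
  have hρc : (ρ : ℂ) ≠ 0 := by exact_mod_cast hρ.ne'
  have hkc : (k : ℂ) ≠ 0 := by exact_mod_cast hk
  have hπc : (Real.pi : ℂ) ≠ 0 := by exact_mod_cast Real.pi_ne_zero
  have hrc : (Real.sqrt (ρ ^ 2 + h ^ 2) : ℂ) ≠ 0 := by exact_mod_cast hsqrt.ne'
  have hnum := ((hr.ofReal_comp.const_mul (Complex.I * k)).cexp).sub_const
    (Complex.exp (Complex.I * k * |h|))
  have hden := ((hasDerivAt_id ρ).ofReal_comp.pow 2).const_mul (4 * Real.pi * Complex.I * k)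
  have hden0 : 4 * Real.pi * Complex.I * k * (ρ : ℂ) ^ 2 ≠ 0 := by
    simp [hρc, hkc, Real.pi_ne_zero]
  have hq := hnum.div hden hden0
  -- `f` is only specified on `(0, ∞)`, which is a neighbourhood of `ρ`.
  refine ⟨_, hq.congr_of_eventuallyEq ?_, ?_⟩
  · filter_upwards [lt_mem_nhds hρ] with x hx
    exact hf x hx
  · rw [hf ρ hρ]
    simp only [Pi.pow_apply, id]
    push_cast
    field_simp
    ring
end

section
/- Let $k \neq 0$ and $h$ be real. Define the complex-valued vector field $F$ on $\mathbb{R}^2 \setminus \{0\}$ by $F(x,y) = (x\, g(x,y),\; y\, g(x,y))$ where $g(x,y) = \frac{e^{ik\sqrt{x^2+y^2+h^2}} - e^{ik|h|}}{4\pi i k (x^2+y^2)}$. Then at every point $(x,y) \neq (0,0)$ both partial derivatives exist and $\frac{\partial}{\partial x}\big(x\,g(x,y)\big) + \frac{\partial}{\partial y}\big(y\,g(x,y)\big) = \frac{e^{ik\sqrt{x^2+y^2+h^2}}}{4\pi\sqrt{x^2+y^2+h^2}}$. (This is the paper's key identity Eq. (2), writing the Helmholtz Green's function as a surface divergence.)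 -/
/-!
Write `ρ² = x² + y²`, `r = √(ρ² + h²)`, `E = e^{ikr}` and `C = e^{ik|h|}`. Since `∂ₓ r = x / r`,
the quotient rule gives
`∂ₓ(x g) = (E - C)/(4πik ρ²) · (1 - 2x²/ρ²) + x² E/(4π r ρ²)`,
which is `hasDerivAt_component`. The formula for `∂_y(y g)` is the same with `x` and `y` swapped,
because `g` is symmetric. In the sum `x² + y² = ρ²` makes the first terms cancel,
as `2 - 2(x² + y²)/ρ² = 0`, and the second ones add up to `E/(4π r)`. The value of the constant
`C` plays no role.
-/

open Complex Real

/-- One component of the divergence, with an arbitrary constant `C` in place of `e^{ik|h|}`. -/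
lemma hasDerivAt_component (k h : ℝ) (hk : k ≠ 0) (C : ℂ) (x y : ℝ) (hρ : 0 < x ^ 2 + y ^ 2) :
    HasDerivAt (fun t : ℝ => (t : ℂ) *
      ((Complex.exp (Complex.I * k * Real.sqrt (t ^ 2 + y ^ 2 + h ^ 2)) - C) /
        (4 * Real.pi * Complex.I * k * (t ^ 2 + y ^ 2))))
      ((Complex.exp (Complex.I * k * Real.sqrt (x ^ 2 + y ^ 2 + h ^ 2)) - C) /
        (4 * Real.pi * Complex.I * k * (x ^ 2 + y ^ 2)) * (1 - 2 * x ^ 2 / (x ^ 2 + y ^ 2)) +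
        x ^ 2 * Complex.exp (Complex.I * k * Real.sqrt (x ^ 2 + y ^ 2 + h ^ 2)) /
          (4 * Real.pi * Real.sqrt (x ^ 2 + y ^ 2 + h ^ 2) * (x ^ 2 + y ^ 2))) x := by
  have hr : 0 < x ^ 2 + y ^ 2 + h ^ 2 := by positivity
  have hsqrt : Real.sqrt (x ^ 2 + y ^ 2 + h ^ 2) ≠ 0 := (Real.sqrt_pos.2 hr).ne'
  have hsqrtC : (Real.sqrt (x ^ 2 + y ^ 2 + h ^ 2) : ℂ) ≠ 0 := by exact_mod_cast hsqrt
  have hρC : (x : ℂ) ^ 2 + (y : ℂ) ^ 2 ≠ 0 := by exact_mod_cast hρ.ne'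
  have hkC : (k : ℂ) ≠ 0 := by exact_mod_cast hk
  have hpiC : (Real.pi : ℂ) ≠ 0 := by exact_mod_cast Real.pi_ne_zero
  have hid : HasDerivAt (fun t : ℝ => (t : ℂ)) 1 x := (hasDerivAt_id x).ofReal_comp
  have hroot :=
    ((((hasDerivAt_pow 2 x).add_const (y ^ 2)).add_const (h ^ 2)).sqrt hr.ne').ofReal_comp
  have hnum := ((hroot.const_mul (Complex.I * k)).cexp).sub_const C
  have hden := ((hid.pow 2).add_const ((y : ℂ) ^ 2)).const_mul (4 * Real.pi * Complex.I * k)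
  have hden0 : (4 * Real.pi * Complex.I * k * ((x : ℂ) ^ 2 + (y : ℂ) ^ 2)) ≠ 0 := by
    simp [hρC, hkC, hpiC]
  refine (hid.mul (hnum.div hden hden0)).congr_deriv ?_
  simp only [Pi.pow_apply, Pi.div_apply]
  push_cast
  generalize Complex.exp (Complex.I * k * Real.sqrt (x ^ 2 + y ^ 2 + h ^ 2)) = E
  generalize (Real.sqrt (x ^ 2 + y ^ 2 + h ^ 2) : ℂ) = R at *
  have hI := Complex.I_ne_zero
  field_simp
  ring

/-- The paper's key identity Eq. (2): with
`g(x,y) = (e^{ik√(x²+y²+h²)} - e^{ik|h|})/(4π i k (x²+y²))` on `ℝ² \ {0}`, at every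
`(x,y) ≠ (0,0)` both partial derivatives of the field `(x g, y g)` exist and
`∂ₓ(x g) + ∂_y(y g) = e^{ik√(x²+y²+h²)}/(4π √(x²+y²+h²))`. -/
theorem stmt12 (k h : ℝ) (hk : k ≠ 0)
    (g : ℝ → ℝ → ℂ)
    (hg : ∀ x y : ℝ, (x, y) ≠ (0, 0) → g x y =
      (Complex.exp (Complex.I * k * Real.sqrt (x ^ 2 + y ^ 2 + h ^ 2)) -
          Complex.exp (Complex.I * k * |h|)) /
        (4 * Real.pi * Complex.I * k * (x ^ 2 + y ^ 2)))
    (x y : ℝ) (hxy : (x, y) ≠ (0, 0)) :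
    ∃ dx dy : ℂ,
      HasDerivAt (fun t : ℝ => t * g t y) dx x ∧
      HasDerivAt (fun t : ℝ => t * g x t) dy y ∧
      dx + dy =
        Complex.exp (Complex.I * k * Real.sqrt (x ^ 2 + y ^ 2 + h ^ 2)) /
          (4 * Real.pi * Real.sqrt (x ^ 2 + y ^ 2 + h ^ 2)) := by
  have hρ : 0 < x ^ 2 + y ^ 2 := by
    by_cases hx : x = 0
    · have hy : y ≠ 0 := fun hy => hxy (by rw [hx, hy])
      positivity
    · positivity
  -- `g` is unspecified at the origin, which a coordinate line through `(x, y)` may meet,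
  -- so the formula for `g` is only used near the point.
  have hfx : ∀ᶠ t in nhds x, (t, y) ≠ (0, 0) :=
    (by fun_prop : Continuous fun t : ℝ => (t, y)).continuousAt.eventually_ne hxy
  have hfy : ∀ᶠ t in nhds y, (x, t) ≠ (0, 0) :=
    (by fun_prop : Continuous fun t : ℝ => (x, t)).continuousAt.eventually_ne hxy
  refine ⟨_, _,
    (hasDerivAt_component k h hk (Complex.exp (Complex.I * k * |h|)) x y hρ).congr_of_eventuallyEq
      ?_,
    (hasDerivAt_component k h hk (Complex.exp (Complex.I * k * |h|)) y x
      (by rwa [add_comm])).congr_of_eventuallyEq ?_, ?_⟩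
  · filter_upwards [hfx] with t ht
    rw [hg t y ht]
  · filter_upwards [hfy] with t ht
    rw [hg x t ht, add_comm (x ^ 2) (t ^ 2), add_comm ((x : ℂ) ^ 2) ((t : ℂ) ^ 2)]
  · have hr : 0 < x ^ 2 + y ^ 2 + h ^ 2 := by positivity
    have hsqrtC : (Real.sqrt (x ^ 2 + y ^ 2 + h ^ 2) : ℂ) ≠ 0 := by
      exact_mod_cast (Real.sqrt_pos.2 hr).ne'
    have hρC : (x : ℂ) ^ 2 + (y : ℂ) ^ 2 ≠ 0 := by exact_mod_cast hρ.ne'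
    have hkC : (k : ℂ) ≠ 0 := by exact_mod_cast hk
    have hpiC : (Real.pi : ℂ) ≠ 0 := by exact_mod_cast Real.pi_ne_zero
    have hI := Complex.I_ne_zero
    rw [add_comm (y ^ 2) (x ^ 2), add_comm ((y : ℂ) ^ 2) ((x : ℂ) ^ 2)]
    generalize Complex.exp (Complex.I * k * Real.sqrt (x ^ 2 + y ^ 2 + h ^ 2)) = E
    generalize (Real.sqrt (x ^ 2 + y ^ 2 + h ^ 2) : ℂ) = R at *
    field_simp
    ring
end

section
/- For all real $x$ and all real $z \neq 0$, the function $y \mapsto \operatorname{sgn}(z)\arctan\frac{x}{|z|} - \operatorname{sgn}(z)\arctan\frac{y x}{|z|\sqrt{x^2+y^2+z^2}}$ is differentiable at every $y \in \mathbb{R}$ with derivative $-\frac{z\,x}{(y^2+z^2)\sqrt{x^2+y^2+z^2}}$. (This is the identity behind the paper's Laplace-limit formula $\frac{\partial^2 H}{\partial y'^2} = -\frac{z' i_{-3}}{4\pi}$, where $i_{-3}(x;\sqrt{y'^2+z'^2}) = \frac{x}{(y'^2+z'^2) r}$, differentiating $k_0 - y' k_{-1}$ in $y'$.) -/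
/-!
With `r = √(x² + y² + z²)` and `u = yx / (|z| r)`, one has `∂u/∂y = x (x² + z²) / (|z| r³)`, and the
factorization `z² r² + x² y² = (x² + z²)(y² + z²)` gives
`1 + u² = (x² + z²)(y² + z²) / (z² r²)`. Hence `∂(arctan u)/∂y = |z| x / ((y² + z²) r)`, and
`sgn(z) |z| = z` yields the claim.
-/

/-- The identity behind the paper's Laplace-limit formula `∂²H/∂y'² = -z' i₋₃/(4π)`:
for real `x` and `z ≠ 0`, the function
`y ↦ sgn(z) arctan(x/|z|) - sgn(z) arctan(yx/(|z|√(x²+y²+z²)))` has derivative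
`-zx/((y²+z²)√(x²+y²+z²))` at every `y`. -/
theorem stmt15 (x z : ℝ) (hz : z ≠ 0) (y : ℝ) :
    HasDerivAt
      (fun y : ℝ =>
        Real.sign z * Real.arctan (x / |z|) -
          Real.sign z *
            Real.arctan (y * x / (|z| * Real.sqrt (x ^ 2 + y ^ 2 + z ^ 2))))
      (-(z * x / ((y ^ 2 + z ^ 2) * Real.sqrt (x ^ 2 + y ^ 2 + z ^ 2)))) y := by
  have hz2 : 0 < z ^ 2 := by positivity
  have hs : 0 < x ^ 2 + y ^ 2 + z ^ 2 := by positivity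
  have ha : 0 < |z| := abs_pos.mpr hz
  have ha2 : |z| ^ 2 = z ^ 2 := sq_abs z
  have hsgn : Real.sign z * |z| = z := by
    rcases lt_or_gt_of_ne hz with h | h
    · rw [Real.sign_of_neg h, abs_of_neg h]; ring
    · rw [Real.sign_of_pos h, abs_of_pos h]; ring
  have hr : 0 < √(x ^ 2 + y ^ 2 + z ^ 2) := Real.sqrt_pos.mpr hs
  have hr2 : √(x ^ 2 + y ^ 2 + z ^ 2) ^ 2 = x ^ 2 + y ^ 2 + z ^ 2 := Real.sq_sqrt hs.le
  have hdr : HasDerivAt (fun t : ℝ => √(x ^ 2 + t ^ 2 + z ^ 2))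
      (2 * y / (2 * √(x ^ 2 + y ^ 2 + z ^ 2))) y := by
    have h : HasDerivAt (fun t : ℝ => x ^ 2 + t ^ 2 + z ^ 2) (2 * y) y := by
      simpa using ((hasDerivAt_pow 2 y).const_add (x ^ 2)).add_const (z ^ 2)
    exact h.sqrt hs.ne'
  have hu := ((hasDerivAt_id y).mul_const x).div (hdr.const_mul |z|) (mul_pos ha hr).ne'
  have hmain := (hu.arctan.const_mul (Real.sign z)).const_sub
    (Real.sign z * Real.arctan (x / |z|))
  refine hmain.congr_deriv ?_
  simp only [id, Pi.div_apply]
  generalize √(x ^ 2 + y ^ 2 + z ^ 2) = r at hr hr2 ⊢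
  have hq : 0 < y ^ 2 + z ^ 2 := by positivity
  have hp : 0 < x ^ 2 + z ^ 2 := by positivity
  have h1 : 1 + (y * x / (|z| * r)) ^ 2
      = (x ^ 2 + z ^ 2) * (y ^ 2 + z ^ 2) / (|z| ^ 2 * r ^ 2) := by
    field_simp
    rw [ha2, hr2]; ring
  have h2 : (1 * x * (|z| * r) - y * x * (|z| * (2 * y / (2 * r)))) / (|z| * r) ^ 2
      = x * (x ^ 2 + z ^ 2) / (|z| * r ^ 3) := by
    have h3 : x ^ 2 + z ^ 2 = r ^ 2 - y ^ 2 := by rw [hr2]; ring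
    rw [h3]
    field_simp
  rw [h1, h2]
  -- Only the numerator's `z` is to become `sgn(z) |z|`.
  have h4 : z * x / ((y ^ 2 + z ^ 2) * r)
      = Real.sign z * |z| * x / ((y ^ 2 + z ^ 2) * r) := by rw [hsgn]
  rw [h4]
  field_simp
end

section
/- For all real $y$ and all real $z \neq 0$, the function $x \mapsto y\operatorname{sgn}(z)\arctan\frac{x}{|z|} \;-\; y\operatorname{sgn}(z)\arctan\frac{y x}{|z|\sqrt{x^2+y^2+z^2}} \;-\; z\ln\left(\sqrt{x^2+y^2+z^2}+x\right)$ has derivative $-\frac{z\left(\sqrt{x^2+y^2+z^2}-y\right)}{x^2+z^2}$ at every $x \in \mathbb{R}$. (This is the Laplace-limit ($k \to 0$) primitive identity for the single-layer boundary integral, Eq. (H9) of the paper up to the factor $1/(4\pi)$: the combination $y\,k_0 - k_1$ of the primitives $k_0, k_1$ is a primitive in $x$ of $-z(r-y)/(x^2+z^2)$.) -/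
/-!
Write `r = √(x² + y² + z²)`, so that `dr/dx = x / r`. The three terms are differentiated separately,
with `sgn(z) |z| = z` removing the signs. They contribute `y z / (x² + z²)`,
`-y² z / (r (x² + z²))` and `-z / r`; the middle one uses the factorisation
`z² r² + x² y² = (x² + z²) (y² + z²)`. The last two add up to `-z r / (x² + z²)` because
`r² = x² + y² + z²`.
-/

/-- The Laplace-limit primitive identity (paper's Eq. (H9) up to `1/(4π)`): for real
`y` and `z ≠ 0`, the function
`x ↦ y sgn(z) arctan(x/|z|) - y sgn(z) arctan(yx/(|z| r)) - z ln(r + x)`,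
`r = √(x²+y²+z²)`, has derivative `-z(r - y)/(x² + z²)` at every `x`. -/
theorem stmt16 (y z : ℝ) (hz : z ≠ 0) (x : ℝ) :
    HasDerivAt
      (fun x : ℝ =>
        y * Real.sign z * Real.arctan (x / |z|) -
          y * Real.sign z *
            Real.arctan (y * x / (|z| * Real.sqrt (x ^ 2 + y ^ 2 + z ^ 2))) -
          z * Real.log (Real.sqrt (x ^ 2 + y ^ 2 + z ^ 2) + x))
      (-(z * (Real.sqrt (x ^ 2 + y ^ 2 + z ^ 2) - y) / (x ^ 2 + z ^ 2))) x := by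
  have hz2 : 0 < z ^ 2 := by positivity
  have ha : 0 < |z| := abs_pos.mpr hz
  have ha2 : |z| ^ 2 = z ^ 2 := sq_abs z
  have hs : Real.sign z * |z| = z := by
    rcases lt_or_gt_of_ne hz with h | h
    · rw [Real.sign_of_neg h, abs_of_neg h]; ring
    · rw [Real.sign_of_pos h, abs_of_pos h]; ring
  have hq : 0 < x ^ 2 + y ^ 2 + z ^ 2 := by positivity
  have hr' : HasDerivAt (fun x : ℝ => Real.sqrt (x ^ 2 + y ^ 2 + z ^ 2))
      (x / Real.sqrt (x ^ 2 + y ^ 2 + z ^ 2)) x := by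
    have h := ((((hasDerivAt_id x).pow 2).add_const (y ^ 2)).add_const (z ^ 2)).sqrt hq.ne'
    refine h.congr_deriv ?_
    simp only [id, Pi.pow_apply]
    field_simp
    norm_num
  have hr : 0 < Real.sqrt (x ^ 2 + y ^ 2 + z ^ 2) := Real.sqrt_pos.mpr hq
  have hr2 : Real.sqrt (x ^ 2 + y ^ 2 + z ^ 2) ^ 2 = x ^ 2 + y ^ 2 + z ^ 2 := Real.sq_sqrt hq.le
  -- `|x| < r` since `z ≠ 0`; this keeps the argument of the logarithm positive.
  have hrx : 0 < Real.sqrt (x ^ 2 + y ^ 2 + z ^ 2) + x := by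
    have : |x| < Real.sqrt (x ^ 2 + y ^ 2 + z ^ 2) := by
      refine abs_lt_of_sq_lt_sq ?_ hr.le
      nlinarith [sq_nonneg y]
    linarith [neg_abs_le x]
  have h1 := ((hasDerivAt_id x).div_const |z|).arctan
  have h2 := (((hasDerivAt_id x).const_mul y).div (hr'.const_mul |z|) (by positivity)).arctan
  have h3 := (hr'.add (hasDerivAt_id x)).log hrx.ne'
  refine (((h1.const_mul (y * Real.sign z)).sub (h2.const_mul (y * Real.sign z))).sub
    (h3.const_mul z)).congr_deriv ?_
  simp only [id, Pi.div_apply, Pi.add_apply]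
  generalize Real.sqrt (x ^ 2 + y ^ 2 + z ^ 2) = r at *
  generalize |z| = a at *
  generalize Real.sign z = s at *
  have hD : 0 < x ^ 2 + z ^ 2 := by positivity
  have hE : 0 < y ^ 2 + z ^ 2 := by positivity
  have e1 : 1 / (1 + (x / a) ^ 2) * (1 / a) = a / (x ^ 2 + z ^ 2) := by
    rw [← ha2] at hD ⊢
    field_simp
    ring
  have hF : a ^ 2 * r ^ 2 + (y * x) ^ 2 = (x ^ 2 + z ^ 2) * (y ^ 2 + z ^ 2) := by
    rw [ha2, hr2]; ring
  have e2 : 1 / (1 + (y * x / (a * r)) ^ 2) *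
      ((y * 1 * (a * r) - y * x * (a * (x / r))) / (a * r) ^ 2) =
      y * a / (r * (x ^ 2 + z ^ 2)) := by
    have f1 : 1 + (y * x / (a * r)) ^ 2 =
        (x ^ 2 + z ^ 2) * (y ^ 2 + z ^ 2) / (a * r) ^ 2 := by
      rw [← hF]; field_simp
    have f2 : y * 1 * (a * r) - y * x * (a * (x / r)) = y * a * (y ^ 2 + z ^ 2) / r := by
      field_simp
      linear_combination y * hr2
    rw [f1, f2]
    field_simp
  have e3 : (x / r + 1) / (r + x) = 1 / r := by
    field_simp
    ring
  rw [e1, e2, e3]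
  have e4 : y * s * (a / (x ^ 2 + z ^ 2)) = y * z / (x ^ 2 + z ^ 2) := by
    linear_combination y / (x ^ 2 + z ^ 2) * hs
  have e5 : y * s * (y * a / (r * (x ^ 2 + z ^ 2))) = y ^ 2 * z / (r * (x ^ 2 + z ^ 2)) := by
    linear_combination y ^ 2 / (r * (x ^ 2 + z ^ 2)) * hs
  rw [e4, e5]
  field_simp
  linear_combination hr2
end
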